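/- arXiv:1805.06778 — 3 statements merged into one kernel-verified Lean document; each statement's English description precedes it below -/
import Mathlib

section
/- Let X be a real Banach space with a Schauder basis (e_n). Then the following are equivalent: (a) (e_n) is partially greedy; (b) (e_n) is quasi-greedy and conservative; (c) there exists a constant C such that ‖x − G_m(x)‖ ≤ C·σ̃^L_m(x) for all x ∈ X, all m ∈ ℕ, and every greedy ordering for x. -/
open Filter Topology

/-- A Schauder basis of a real normed space `X`, given by basis vectors `e n` together with
biorthogonal (coordinate) functionals `f n`, such that every `x` is the limit of its
partial-sum expansion `∑_{n < N} f n x • e n`. -/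
structure SchauderBasisSys (X : Type*) [NormedAddCommGroup X] [NormedSpace ℝ X] where
  e : ℕ → X
  f : ℕ → X →L[ℝ] ℝ
  biorth : ∀ m n : ℕ, f m (e n) = if m = n then (1 : ℝ) else 0
  expansion : ∀ x : X,
    Filter.Tendsto (fun N : ℕ => ∑ n ∈ Finset.range N, f n x • e n) Filter.atTop (nhds x)

namespace SchauderBasisSys

variable {X : Type*} [NormedAddCommGroup X] [NormedSpace ℝ X]

/-- The coordinate projection onto a finite set `A` of indices: `P_A x = ∑_{i ∈ A} e_i^*(x) e_i`. -/
noncomputable def P (S : SchauderBasisSys X) (A : Finset ℕ) (x : X) : X :=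
  ∑ i ∈ A, S.f i x • S.e i

/-- The indicator vector `1_A = ∑_{i ∈ A} e_i`. -/
noncomputable def ind (S : SchauderBasisSys X) (A : Finset ℕ) : X :=
  ∑ i ∈ A, S.e i

/-- A greedy ordering for `x`: an injection `ρ : ℕ → ℕ` whose range contains the support of `x`
and which rearranges the coordinates of `x` in nonincreasing order of absolute value. -/
def IsGreedyOrdering (S : SchauderBasisSys X) (x : X) (ρ : ℕ → ℕ) : Prop :=
  Function.Injective ρ ∧ (∀ n : ℕ, S.f n x ≠ 0 → n ∈ Set.range ρ) ∧
    ∀ j k : ℕ, j ≤ k → |S.f (ρ k) x| ≤ |S.f (ρ j) x|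

/-- The greedy set `Λ_m(x) = {ρ(0), …, ρ(m-1)}` associated to a greedy ordering `ρ`. -/
def Lam (ρ : ℕ → ℕ) (m : ℕ) : Finset ℕ := (Finset.range m).image ρ

/-- The `m`-th greedy approximation `G_m(x) = ∑_{j < m} e_{ρ(j)}^*(x) e_{ρ(j)}`. -/
noncomputable def G (S : SchauderBasisSys X) (x : X) (ρ : ℕ → ℕ) (m : ℕ) : X :=
  ∑ j ∈ Finset.range m, S.f (ρ j) x • S.e (ρ j)

/-- Quasi-greedy: `‖G_m(x)‖ ≤ K ‖x‖` uniformly. -/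
def QuasiGreedy (S : SchauderBasisSys X) : Prop :=
  ∃ K : ℝ, ∀ (x : X) (ρ : ℕ → ℕ) (m : ℕ),
    S.IsGreedyOrdering x ρ → ‖S.G x ρ m‖ ≤ K * ‖x‖

/-- Conservative: `‖1_A‖ ≤ Γ ‖1_B‖` whenever `|A| ≤ |B|` and `max A < min B`. -/
def Conservative (S : SchauderBasisSys X) : Prop :=
  ∃ Γ : ℝ, ∀ A B : Finset ℕ, A.card ≤ B.card →
    (∀ i ∈ A, ∀ j ∈ B, i < j) → ‖S.ind A‖ ≤ Γ * ‖S.ind B‖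

/-- Reverse conservative: `‖1_A‖ ≤ Γ ‖1_B‖` whenever `|A| ≤ |B|` and `max B < min A`. -/
def ReverseConservative (S : SchauderBasisSys X) : Prop :=
  ∃ Γ : ℝ, ∀ A B : Finset ℕ, A.card ≤ B.card →
    (∀ i ∈ A, ∀ j ∈ B, j < i) → ‖S.ind A‖ ≤ Γ * ‖S.ind B‖

/-- Partially greedy: `‖x - G_m(x)‖ ≤ C ‖∑_{n ≥ m} e_n^*(x) e_n‖ = C ‖x - P_{[0,m)}(x)‖`. -/
def PartiallyGreedy (S : SchauderBasisSys X) : Prop :=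
  ∃ C : ℝ, ∀ (x : X) (ρ : ℕ → ℕ) (m : ℕ), S.IsGreedyOrdering x ρ →
    ‖x - S.G x ρ m‖ ≤ C * ‖x - S.P (Finset.range m) x‖

/-- Almost greedy: `‖x - G_m(x)‖ ≤ C inf{‖x - P_A(x)‖ : |A| ≤ m}`. -/
def AlmostGreedy (S : SchauderBasisSys X) : Prop :=
  ∃ C : ℝ, ∀ (x : X) (ρ : ℕ → ℕ) (m : ℕ) (A : Finset ℕ), S.IsGreedyOrdering x ρ →
    A.card ≤ m → ‖x - S.G x ρ m‖ ≤ C * ‖x - S.P A x‖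

end SchauderBasisSys

open SchauderBasisSys

/-!
A partially greedy basis is quasi-greedy because the projections onto initial segments are
uniformly bounded, and it is conservative because, for `A < B` with `|A| = |B|` and `A ⊆ [0, m)`,
the set `([0, m) \ A) ∪ B` is a greedy set of size `m` of `1_{[0, m) ∪ B}`, with remainder `1_A`.

Conversely, let `Λ` be a greedy set of `x` and let `|A| ≤ |Λ|` with `A \ Λ` to the left of `Λ \ A`.
Then `Λ \ A` is a greedy set of `y = x - P_A x` and
`x - P_Λ x = y - P_{Λ \ A} y + P_{A \ Λ} x`. With `t = min {|e_j^*(x)| : j ∈ Λ \ A}`, the last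
term is at most `2tΓ‖1_{Λ \ A}‖` by convexity and conservativity, and `t‖1_{Λ \ A}‖ ≤ 4K²‖y‖` by
quasi-greediness and Abel summation.
-/

section NormedSpace

variable {E : Type*} [SeminormedAddCommGroup E] [NormedSpace ℝ E]

-- The norm is convex in `c`, so on the cube `[0, t]^A` it is maximal at a vertex.
theorem exists_subset_norm_sum_smul_le {ι : Type*} (v : ι → E) {A : Finset ι} {c : ι → ℝ} {t : ℝ}
    (ht : 0 ≤ t) (hc : ∀ i ∈ A, c i ∈ Set.Icc 0 t) :
    ∃ B ⊆ A, ‖∑ i ∈ A, c i • v i‖ ≤ t * ‖∑ i ∈ B, v i‖ := by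
  classical
  have hcube : (fun i : A => c i) ∈ convexHull ℝ (Set.univ.pi fun _ : A => ({0, t} : Set ℝ)) := by
    rw [convexHull_pi, convexHull_pair, segment_eq_Icc ht]
    exact fun i _ => hc i i.2
  have hconvex : ConvexOn ℝ Set.univ fun a : A → ℝ => ‖∑ i, a i • v i‖ :=
    convexOn_univ_norm.comp_linearMap (Fintype.linearCombination ℝ fun i : A => v i)
  obtain ⟨a, ha, hle⟩ := hconvex.exists_ge_of_mem_convexHull (Set.subset_univ _) hcube
  have ha' : ∀ i, a i = if a i ≠ 0 then t else 0 := fun i => by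
    rcases ha i trivial with h | h <;> grind
  refine ⟨(Finset.univ.filter (a · ≠ 0)).map (Function.Embedding.subtype _),
    fun _ => Finset.property_of_mem_map_subtype _, ?_⟩
  have hvertex : ∑ i, a i • v i = t • ∑ i with a i ≠ 0, v i := by
    rw [Finset.smul_sum, Finset.sum_filter]
    refine Finset.sum_congr rfl fun i _ => ?_
    conv_lhs => rw [ha' i, ite_smul, zero_smul]
  rw [← Finset.sum_coe_sort A, Finset.sum_map]
  calc _ ≤ ‖∑ i, a i • v i‖ := hle
    _ = _ := by rw [hvertex, norm_smul, Real.norm_of_nonneg ht]; rfl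

theorem norm_sum_smul_le_of_abs_le {ι : Type*} (v : ι → E) {A : Finset ι} {c : ι → ℝ} {t M : ℝ}
    (ht : 0 ≤ t) (hc : ∀ i ∈ A, |c i| ≤ t) (hM : ∀ B ⊆ A, ‖∑ i ∈ B, v i‖ ≤ M) :
    ‖∑ i ∈ A, c i • v i‖ ≤ 2 * t * M := by
  have hcube {d : ι → ℝ} (hd : ∀ i ∈ A, d i ∈ Set.Icc 0 t) : ‖∑ i ∈ A, d i • v i‖ ≤ t * M := by
    obtain ⟨B, hBA, hB⟩ := exists_subset_norm_sum_smul_le v ht hd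
    exact hB.trans (mul_le_mul_of_nonneg_left (hM B hBA) ht)
  have hpos := hcube (d := fun i => (c i)⁺) fun i hi =>
    ⟨posPart_nonneg _, sup_le ((le_abs_self _).trans (hc i hi)) ht⟩
  have hneg := hcube (d := fun i => (c i)⁻) fun i hi =>
    ⟨negPart_nonneg _, sup_le ((neg_le_abs _).trans (hc i hi)) ht⟩
  calc ‖∑ i ∈ A, c i • v i‖ = ‖∑ i ∈ A, (c i)⁺ • v i - ∑ i ∈ A, (c i)⁻ • v i‖ := by
        simp only [← Finset.sum_sub_distrib, ← sub_smul, posPart_sub_negPart]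
    _ ≤ t * M + t * M := norm_sub_le_of_le hpos hneg
    _ = 2 * t * M := by ring

theorem norm_sum_range_succ_smul_le (v : ℕ → E) {c : ℕ → ℝ} {M : ℝ} {n : ℕ} (h0 : 0 ≤ c 0)
    (hc : MonotoneOn c (Set.Iic n)) (hM : ∀ k ≤ n + 1, ‖∑ j ∈ Finset.range k, v j‖ ≤ M) :
    ‖∑ j ∈ Finset.range (n + 1), c j • v j‖ ≤ 2 * c n * M := by
  have hM0 : 0 ≤ M := (norm_nonneg _).trans (hM 0 (Nat.zero_le _))
  have hn : 0 ≤ c n := h0.trans (hc (Set.mem_Iic.2 n.zero_le) Set.self_mem_Iic n.zero_le)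
  have hsmul {b : ℝ} {k : ℕ} (hb : 0 ≤ b) (hk : k ≤ n + 1) :
      ‖b • ∑ j ∈ Finset.range k, v j‖ ≤ b * M := by
    rw [norm_smul, Real.norm_of_nonneg hb]
    exact mul_le_mul_of_nonneg_left (hM k hk) hb
  have hstep {i : ℕ} (hi : i < n) : 0 ≤ c (i + 1) - c i :=
    sub_nonneg.2 (hc hi.le (Nat.succ_le_of_lt hi) i.le_succ)
  rw [Finset.sum_range_by_parts, Nat.add_sub_cancel]
  calc _ ≤ c n * M + ∑ i ∈ Finset.range n, (c (i + 1) - c i) * M :=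
        norm_sub_le_of_le (hsmul hn le_rfl) <| norm_sum_le_of_le _ fun i hi =>
          have hi := Finset.mem_range.1 hi
          hsmul (hstep hi) (Nat.succ_le_succ hi.le)
    _ = 2 * c n * M - c 0 * M := by rw [← Finset.sum_mul, Finset.sum_range_sub]; ring
    _ ≤ 2 * c n * M := sub_le_self _ (mul_nonneg h0 hM0)

end NormedSpace

namespace SchauderBasisSys

variable {X : Type*} [NormedAddCommGroup X] [NormedSpace ℝ X] {S : SchauderBasisSys X}

section Projections

theorem f_sum (S : SchauderBasisSys X) (D : Finset ℕ) (c : ℕ → ℝ) (n : ℕ) :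
    S.f n (∑ i ∈ D, c i • S.e i) = if n ∈ D then c n else 0 := by
  simp [map_sum, S.biorth]

theorem norm_ind_singleton_pos (S : SchauderBasisSys X) (n : ℕ) : 0 < ‖S.ind {n}‖ := by
  rw [norm_pos_iff, ind, Finset.sum_singleton]
  intro h
  simpa [h] using S.biorth n n

theorem P_sum (S : SchauderBasisSys X) (A D : Finset ℕ) (c : ℕ → ℝ) :
    S.P A (∑ i ∈ D, c i • S.e i) = ∑ i ∈ A ∩ D, c i • S.e i := by
  simp only [P, f_sum, ite_smul, zero_smul, ← Finset.sum_filter, Finset.filter_mem_eq_inter]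

theorem P_empty (S : SchauderBasisSys X) (x : X) : S.P ∅ x = 0 := Finset.sum_empty

theorem f_sub_P (S : SchauderBasisSys X) (A : Finset ℕ) (x : X) (n : ℕ) :
    S.f n (x - S.P A x) = if n ∈ A then 0 else S.f n x := by
  rw [map_sub, P, f_sum]
  split_ifs <;> simp

theorem P_sub_P_of_disjoint (S : SchauderBasisSys X) {A B : Finset ℕ} (h : Disjoint A B) (x : X) :
    S.P A (x - S.P B x) = S.P A x :=
  Finset.sum_congr rfl fun i hi => by rw [f_sub_P, if_neg (Finset.disjoint_left.1 h hi)]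

theorem P_ind (S : SchauderBasisSys X) (A D : Finset ℕ) : S.P A (S.ind D) = S.ind (A ∩ D) := by
  simpa only [ind, one_smul] using S.P_sum A D fun _ => 1

theorem ind_sub_P_ind (S : SchauderBasisSys X) (D A : Finset ℕ) :
    S.ind D - S.P A (S.ind D) = S.ind (D \ A) := by
  rw [P_ind, Finset.inter_comm, sub_eq_iff_eq_add']
  exact (Finset.sum_inter_add_sum_sdiff D A _).symm

end Projections

section GreedySets

/-- `Λ` is a greedy set of `x` if it is `Λ_m(x)` for some greedy ordering for `x` and some `m`
(necessarily `m = |Λ|`), so that `G_m(x) = P_Λ x`. Quantifying over greedy sets replaces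
quantifying over greedy orderings and `m`. -/
def IsGreedySet (S : SchauderBasisSys X) (x : X) (Λ : Finset ℕ) : Prop :=
  ∃ ρ m, S.IsGreedyOrdering x ρ ∧ Lam ρ m = Λ

theorem mem_Lam {ρ : ℕ → ℕ} {m i : ℕ} : i ∈ Lam ρ m ↔ ∃ j < m, ρ j = i := by
  simp [Lam]

theorem card_Lam {ρ : ℕ → ℕ} (hρ : Function.Injective ρ) (m : ℕ) : (Lam ρ m).card = m := by
  rw [Lam, Finset.card_image_of_injective _ hρ, Finset.card_range]

theorem G_eq_P_Lam (S : SchauderBasisSys X) (x : X) {ρ : ℕ → ℕ} (hρ : Function.Injective ρ)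
    (m : ℕ) : S.G x ρ m = S.P (Lam ρ m) x :=
  (Finset.sum_image (f := fun i => S.f i x • S.e i) hρ.injOn).symm

theorem IsGreedySet.abs_f_le {x : X} {Λ : Finset ℕ} (h : S.IsGreedySet x Λ) {i j : ℕ}
    (hi : i ∉ Λ) (hj : j ∈ Λ) : |S.f i x| ≤ |S.f j x| := by
  obtain ⟨ρ, m, ⟨-, hsupp, hmono⟩, rfl⟩ := h
  obtain ⟨b, hb, rfl⟩ := mem_Lam.1 hj
  by_cases hi0 : S.f i x = 0
  · simp [hi0]
  obtain ⟨a, rfl⟩ := hsupp i hi0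
  exact hmono b a (not_lt.1 fun hab => hi (mem_Lam.2 ⟨a, hab.trans hb, rfl⟩))

theorem exists_perm_Lam_eq_toFinset_take {L : List ℕ} (hL : L.Nodup) :
    ∃ σ : Equiv.Perm ℕ, ∀ n ≤ L.length, Lam σ n = (L.take n).toFinset := by
  have := Equiv.Perm.isMultiplyPretransitive ℕ L.length
  obtain ⟨σ, hσ⟩ := MulAction.exists_smul_eq (Equiv.Perm ℕ)
    (Fin.valEmbedding : Fin L.length ↪ ℕ) ⟨L.get, hL.injective_get⟩
  have hσ' (i : ℕ) (hi : i < L.length) : σ i = L[i] := DFunLike.congr_fun hσ ⟨i, hi⟩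
  refine ⟨σ, fun n hn => Finset.ext fun i => ?_⟩
  rw [mem_Lam, List.mem_toFinset, List.mem_take_iff_getElem]
  exact exists_congr fun j =>
    ⟨fun ⟨hj, h⟩ => ⟨lt_min hj (hj.trans_le hn), (hσ' j _).symm.trans h⟩,
      fun ⟨hj, h⟩ => ⟨hj.trans_le (min_le_left _ _), (hσ' j _).trans h⟩⟩

theorem exists_perm_Lam_eq_of_subset {F D : Finset ℕ} (h : F ⊆ D) :
    ∃ σ : Equiv.Perm ℕ, Lam σ F.card = F ∧ Lam σ D.card = D := by
  have hlength : (F.toList ++ (D \ F).toList).length = D.card := by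
    rw [List.length_append, Finset.length_toList, Finset.length_toList, add_comm,
      Finset.card_sdiff_add_card_eq_card h]
  obtain ⟨σ, hσ⟩ := exists_perm_Lam_eq_toFinset_take (L := F.toList ++ (D \ F).toList) <|
    F.nodup_toList.append (D \ F).nodup_toList fun i hF hD => by simp_all
  refine ⟨σ, ?_, ?_⟩
  · rw [hσ _ (hlength ▸ Finset.card_le_card h), List.take_left' F.length_toList,
      Finset.toList_toFinset]
  · rw [hσ _ hlength.ge, ← hlength, List.take_length, List.toFinset_append,
      Finset.toList_toFinset, Finset.toList_toFinset, Finset.union_sdiff_of_subset h]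

theorem isGreedySet_sum_smul (S : SchauderBasisSys X) {F D : Finset ℕ} (h : F ⊆ D) {ε : ℕ → ℝ}
    (hε : ∀ i ∈ D, |ε i| = 1) : S.IsGreedySet (∑ i ∈ D, ε i • S.e i) F := by
  obtain ⟨σ, hF, hD⟩ := exists_perm_Lam_eq_of_subset h
  refine ⟨σ, F.card, ⟨σ.injective, fun n _ => σ.surjective n, fun j k hjk => ?_⟩, hF⟩
  rw [f_sum, f_sum]
  by_cases hk : σ k ∈ D
  · obtain ⟨i, hi, hik⟩ := mem_Lam.1 (hD.symm ▸ hk)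
    have hj : σ j ∈ D := hD ▸ mem_Lam.2 ⟨j, hjk.trans_lt (σ.injective hik ▸ hi), rfl⟩
    simp [hk, hj, hε]
  · simp [hk]

theorem isGreedySet_ind (S : SchauderBasisSys X) {F D : Finset ℕ} (h : F ⊆ D) :
    S.IsGreedySet (S.ind D) F := by
  simpa only [ind, one_smul] using S.isGreedySet_sum_smul h (ε := fun _ => 1) (by simp)

theorem IsGreedySet.sub_P {x : X} {Λ : Finset ℕ} (h : S.IsGreedySet x Λ) (A : Finset ℕ) :
    S.IsGreedySet (x - S.P A x) (Λ \ A) := by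
  obtain ⟨ρ, m, ⟨hinj, hsupp, hmono⟩, rfl⟩ := h
  let p : ℕ → Prop := fun j => ρ j ∉ A
  have hp : {j | p j}.Infinite := (A.finite_toSet.preimage hinj.injOn).infinite_compl
  have hnth (j : ℕ) : ρ (Nat.nth p j) ∉ A := Nat.nth_mem_of_infinite hp j
  have hcount {j : ℕ} (hj : ρ j ∉ A) : ρ (Nat.nth p (Nat.count p j)) = ρ j :=
    congrArg ρ (Nat.nth_count (p := p) hj)
  refine ⟨ρ ∘ Nat.nth p, Nat.count p m, ⟨hinj.comp (Nat.nth_injective hp), fun n hn => ?_,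
    fun j k hjk => ?_⟩, Finset.ext fun i => ?_⟩
  · obtain ⟨hnA, hn0⟩ : n ∉ A ∧ S.f n x ≠ 0 := by simpa [f_sub_P] using hn
    obtain ⟨j, rfl⟩ := hsupp n hn0
    exact ⟨Nat.count p j, hcount hnA⟩
  · simpa only [Function.comp_apply, f_sub_P, hnth, if_false] using
      hmono _ _ (Nat.nth_monotone hp hjk)
  · simp only [Finset.mem_sdiff, mem_Lam, Function.comp_apply]
    constructor
    · rintro ⟨j, hj, rfl⟩
      exact ⟨⟨_, Nat.nth_lt_of_lt_count hj, rfl⟩, hnth j⟩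
    · rintro ⟨⟨j, hj, rfl⟩, hA⟩
      exact ⟨Nat.count p j, Nat.count_strict_mono (p := p) hA hj, hcount hA⟩

end GreedySets

section Constants

/-- The basis has basis constant at most `K`: the projections onto initial segments of indices are
bounded by `K`. -/
def HasBasisConstant (S : SchauderBasisSys X) (K : ℝ) : Prop :=
  ∀ (N : ℕ) (x : X), ‖S.P (Finset.range N) x‖ ≤ K * ‖x‖

/-- Quasi-greedy with constant `K`, expressed through greedy sets. -/
def QuasiGreedyWith (S : SchauderBasisSys X) (K : ℝ) : Prop :=
  ∀ (x : X) (Λ : Finset ℕ), S.IsGreedySet x Λ → ‖S.P Λ x‖ ≤ K * ‖x‖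

/-- Conservative with constant `Γ`. -/
def ConservativeWith (S : SchauderBasisSys X) (Γ : ℝ) : Prop :=
  ∀ A B : Finset ℕ, A.card ≤ B.card → (∀ i ∈ A, ∀ j ∈ B, i < j) → ‖S.ind A‖ ≤ Γ * ‖S.ind B‖

/-- Partially greedy with constant `C`, expressed through greedy sets. -/
def PartiallyGreedyWith (S : SchauderBasisSys X) (C : ℝ) : Prop :=
  ∀ (x : X) (Λ : Finset ℕ), S.IsGreedySet x Λ →
    ‖x - S.P Λ x‖ ≤ C * ‖x - S.P (Finset.range Λ.card) x‖

/-- Greedy approximation of `x` is, up to the constant `C`, as good as the best projection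
onto at most as many indices to the left of the greedy set:
`‖x - G_m(x)‖ ≤ C σ̃^L_m(x)`, expressed through greedy sets. -/
def LeftGreedyWith (S : SchauderBasisSys X) (C : ℝ) : Prop :=
  ∀ (x : X) (Λ A : Finset ℕ), S.IsGreedySet x Λ → A.card ≤ Λ.card →
    (∀ i ∈ A, ∀ j ∈ Λ, i < j) → ‖x - S.P Λ x‖ ≤ C * ‖x - S.P A x‖

theorem exists_hasBasisConstant [CompleteSpace X] (S : SchauderBasisSys X) :
    ∃ K, S.HasBasisConstant K := by
  let T (N : ℕ) : X →L[ℝ] X := ∑ n ∈ Finset.range N, (S.f n).smulRight (S.e n)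
  have hT (N : ℕ) (x : X) : T N x = S.P (Finset.range N) x := by simp [T, P]
  obtain ⟨K, hK⟩ := banach_steinhaus (g := T) fun x => by
    obtain ⟨C, hC⟩ := (S.expansion x).norm.bddAbove_range
    exact ⟨C, fun N => hT N x ▸ hC ⟨N, rfl⟩⟩
  exact ⟨K, fun N x => hT N x ▸ (T N).le_of_opNorm_le (hK N) x⟩

theorem quasiGreedy_iff : S.QuasiGreedy ↔ ∃ K, S.QuasiGreedyWith K := by
  refine exists_congr fun K => ⟨?_, fun h x ρ m hρ => ?_⟩
  · rintro h x _ ⟨ρ, m, hρ, rfl⟩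
    exact S.G_eq_P_Lam x hρ.1 m ▸ h x ρ m hρ
  · exact S.G_eq_P_Lam x hρ.1 m ▸ h x _ ⟨ρ, m, hρ, rfl⟩

theorem partiallyGreedy_iff : S.PartiallyGreedy ↔ ∃ C, S.PartiallyGreedyWith C := by
  refine exists_congr fun C => ⟨?_, fun h x ρ m hρ => ?_⟩
  · rintro h x _ ⟨ρ, m, hρ, rfl⟩
    rw [card_Lam hρ.1, ← S.G_eq_P_Lam x hρ.1]
    exact h x ρ m hρ
  · have := h x _ ⟨ρ, m, hρ, rfl⟩
    rwa [card_Lam hρ.1, ← S.G_eq_P_Lam x hρ.1] at this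

theorem leftGreedyWith_iff {C : ℝ} :
    S.LeftGreedyWith C ↔ ∀ (x : X) (ρ : ℕ → ℕ) (m : ℕ) (A : Finset ℕ),
      S.IsGreedyOrdering x ρ → A.card ≤ m → (∀ i ∈ A, ∀ j ∈ Lam ρ m, i < j) →
      ‖x - S.G x ρ m‖ ≤ C * ‖x - S.P A x‖ := by
  refine ⟨fun h x ρ m A hρ hcard hlt => ?_, ?_⟩
  · rw [S.G_eq_P_Lam x hρ.1]
    exact h x _ A ⟨ρ, m, hρ, rfl⟩ (by rwa [card_Lam hρ.1]) hlt
  · rintro h x _ A ⟨ρ, m, hρ, rfl⟩ hcard hlt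
    rw [card_Lam hρ.1] at hcard
    exact S.G_eq_P_Lam x hρ.1 m ▸ h x ρ m A hρ hcard hlt

theorem QuasiGreedyWith.nonneg {K : ℝ} (h : S.QuasiGreedyWith K) : 0 ≤ K := by
  have hgreedy : S.IsGreedySet (S.ind {0}) ∅ := S.isGreedySet_ind (Finset.empty_subset _)
  exact nonneg_of_mul_nonneg_left ((norm_nonneg _).trans (h _ _ hgreedy))
    (S.norm_ind_singleton_pos 0)

theorem ConservativeWith.nonneg {Γ : ℝ} (h : S.ConservativeWith Γ) : 0 ≤ Γ :=
  nonneg_of_mul_nonneg_left ((norm_nonneg _).trans (h ∅ {0} (by simp) (by simp)))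
    (S.norm_ind_singleton_pos 0)

theorem PartiallyGreedyWith.nonneg {C : ℝ} (h : S.PartiallyGreedyWith C) : 0 ≤ C := by
  have hgreedy : S.IsGreedySet (S.ind {0}) ∅ := S.isGreedySet_ind (Finset.empty_subset _)
  have hle := (norm_nonneg _).trans (h _ _ hgreedy)
  rw [Finset.card_empty, Finset.range_zero, P_empty, sub_zero] at hle
  exact nonneg_of_mul_nonneg_left hle (S.norm_ind_singleton_pos 0)

end Constants

section Necessity

variable {C K : ℝ}

theorem PartiallyGreedyWith.quasiGreedyWith (h : S.PartiallyGreedyWith C)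
    (hK : S.HasBasisConstant K) : S.QuasiGreedyWith (1 + C * (1 + K)) := fun x Λ hΛ =>
  have htail : ‖x - S.P (Finset.range Λ.card) x‖ ≤ ‖x‖ + K * ‖x‖ :=
    norm_sub_le_of_le le_rfl (hK _ x)
  calc ‖S.P Λ x‖ = ‖x - (x - S.P Λ x)‖ := by rw [sub_sub_cancel]
    _ ≤ ‖x‖ + C * (‖x‖ + K * ‖x‖) :=
      norm_sub_le_of_le le_rfl ((h x Λ hΛ).trans (mul_le_mul_of_nonneg_left htail h.nonneg))
    _ = (1 + C * (1 + K)) * ‖x‖ := by ring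

theorem PartiallyGreedyWith.norm_ind_le_of_card_eq (h : S.PartiallyGreedyWith C) {A B : Finset ℕ}
    (hcard : A.card = B.card) (hlt : ∀ i ∈ A, ∀ j ∈ B, i < j) : ‖S.ind A‖ ≤ C * ‖S.ind B‖ := by
  obtain ⟨m, hAm, hmB⟩ : ∃ m, (∀ i ∈ A, i < m) ∧ ∀ j ∈ B, m ≤ j :=
    ⟨A.sup (· + 1), fun i hi => Finset.le_sup (f := (· + 1)) hi,
      fun j hj => Finset.sup_le fun i hi => hlt i hi j hj⟩
  have hA : A ⊆ Finset.range m := fun i hi => Finset.mem_range.2 (hAm i hi)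
  have hdisj : Disjoint (Finset.range m) B :=
    Finset.disjoint_left.2 fun i hi hB => (hmB i hB).not_gt (Finset.mem_range.1 hi)
  have hAD : A ⊆ Finset.range m ∪ B := hA.trans Finset.subset_union_left
  have hsize : ((Finset.range m ∪ B) \ A).card = m := by
    rw [Finset.card_sdiff_of_subset hAD, Finset.card_union_of_disjoint hdisj, hcard,
      Nat.add_sub_cancel, Finset.card_range]
  have hle := h _ _ (S.isGreedySet_ind (Finset.sdiff_subset (s := Finset.range m ∪ B) (t := A)))
  rwa [hsize, ind_sub_P_ind, ind_sub_P_ind, Finset.sdiff_sdiff_eq_self hAD,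
    Finset.union_sdiff_cancel_left hdisj] at hle

theorem PartiallyGreedyWith.conservativeWith (h : S.PartiallyGreedyWith C)
    (hK : S.QuasiGreedyWith K) : S.ConservativeWith (C * K) := fun A B hcard hlt => by
  obtain ⟨B', hB', hcard'⟩ := Finset.exists_subset_card_eq hcard
  have hsub := hK _ _ (S.isGreedySet_ind hB')
  rw [P_ind, Finset.inter_eq_left.2 hB'] at hsub
  calc ‖S.ind A‖ ≤ C * ‖S.ind B'‖ :=
        h.norm_ind_le_of_card_eq hcard'.symm fun i hi j hj => hlt i hi j (hB' hj)
    _ ≤ C * (K * ‖S.ind B‖) := mul_le_mul_of_nonneg_left hsub h.nonneg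
    _ = C * K * ‖S.ind B‖ := (mul_assoc ..).symm

theorem LeftGreedyWith.quasiGreedyWith (h : S.LeftGreedyWith C) : S.QuasiGreedyWith (1 + C) :=
  fun x Λ hΛ => by
    have hle := h x Λ ∅ hΛ (Nat.zero_le _) (by simp)
    rw [P_empty, sub_zero] at hle
    calc ‖S.P Λ x‖ = ‖x - (x - S.P Λ x)‖ := by rw [sub_sub_cancel]
      _ ≤ ‖x‖ + C * ‖x‖ := norm_sub_le_of_le le_rfl hle
      _ = (1 + C) * ‖x‖ := by ring

theorem LeftGreedyWith.conservativeWith (h : S.LeftGreedyWith C) : S.ConservativeWith C :=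
  fun A B hcard hlt => by
    have hdisj : Disjoint A B := Finset.disjoint_left.2 fun i hA hB => (hlt i hA i hB).false
    have hle := h _ B A (S.isGreedySet_ind (Finset.subset_union_right : B ⊆ A ∪ B)) hcard hlt
    rwa [ind_sub_P_ind, ind_sub_P_ind, Finset.union_sdiff_cancel_right hdisj,
      Finset.union_sdiff_cancel_left hdisj] at hle

end Necessity

section Sufficiency

variable {K Γ : ℝ}

theorem QuasiGreedyWith.norm_ind_le (hK : S.QuasiGreedyWith K) {D : Finset ℕ} {ε : ℕ → ℝ}
    (hε : ∀ i ∈ D, |ε i| = 1) : ‖S.ind D‖ ≤ 2 * K * ‖∑ i ∈ D, ε i • S.e i‖ := by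
  have hsub : ∀ F ⊆ D, ‖∑ i ∈ F, ε i • S.e i‖ ≤ K * ‖∑ i ∈ D, ε i • S.e i‖ := fun F hF => by
    have hle := hK _ _ (S.isGreedySet_sum_smul hF hε)
    rwa [P_sum, Finset.inter_eq_left.2 hF] at hle
  have hind : S.ind D = ∑ i ∈ D, ε i • ε i • S.e i := Finset.sum_congr rfl fun i hi => by
    rw [smul_smul, ← abs_mul_abs_self, hε i hi, one_mul, one_smul]
  calc ‖S.ind D‖ ≤ 2 * 1 * (K * ‖∑ i ∈ D, ε i • S.e i‖) :=
        hind ▸ norm_sum_smul_le_of_abs_le _ zero_le_one (fun i hi => (hε i hi).le) hsub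
    _ = 2 * K * ‖∑ i ∈ D, ε i • S.e i‖ := by ring

-- Abel summation against the coefficients `t / |e_i^*(x)|`, which increase along a greedy ordering
-- and are at most `1`.
theorem QuasiGreedyWith.mul_norm_sum_sign_le (hK : S.QuasiGreedyWith K) {x : X} {Λ : Finset ℕ}
    (hΛ : S.IsGreedySet x Λ) {t : ℝ} (ht0 : 0 < t) (ht : ∀ j ∈ Λ, t ≤ |S.f j x|) :
    t * ‖∑ i ∈ Λ, (S.f i x / |S.f i x|) • S.e i‖ ≤ 2 * K * ‖x‖ := by
  obtain ⟨ρ, m, hρ, rfl⟩ := hΛ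
  have hKx : 0 ≤ K * ‖x‖ := mul_nonneg hK.nonneg (norm_nonneg x)
  rcases m with _ | n
  · simpa [Lam, mul_assoc] using hKx
  have htρ {j : ℕ} (hj : j ≤ n) : t ≤ |S.f (ρ j) x| :=
    ht _ (mem_Lam.2 ⟨j, Nat.lt_succ_of_le hj, rfl⟩)
  have habel := norm_sum_range_succ_smul_le (fun j => S.f (ρ j) x • S.e (ρ j))
    (c := fun j => t / |S.f (ρ j) x|) (M := K * ‖x‖) (n := n) (by positivity)
    (fun i _ j hj hij => div_le_div_of_nonneg_left ht0.le (ht0.trans_le (htρ hj)) (hρ.2.2 i j hij))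
    fun k _ => (congrArg norm (S.G_eq_P_Lam x hρ.1 k)).trans_le (hK x _ ⟨ρ, k, hρ, rfl⟩)
  have hsum : ∑ j ∈ Finset.range (n + 1), (t / |S.f (ρ j) x|) • S.f (ρ j) x • S.e (ρ j) =
      t • ∑ i ∈ Lam ρ (n + 1), (S.f i x / |S.f i x|) • S.e i := by
    rw [Lam, Finset.sum_image hρ.1.injOn, Finset.smul_sum]
    refine Finset.sum_congr rfl fun j _ => ?_
    rw [smul_smul, smul_smul, div_mul_comm, mul_comm]
  rw [hsum, norm_smul, Real.norm_of_nonneg ht0.le] at habel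
  calc _ ≤ 2 * (t / |S.f (ρ n) x|) * (K * ‖x‖) := habel
    _ ≤ 2 * 1 * (K * ‖x‖) := by gcongr; exact div_le_one_of_le₀ (htρ le_rfl) (abs_nonneg _)
    _ = 2 * K * ‖x‖ := by ring

theorem QuasiGreedyWith.mul_norm_ind_le (hK : S.QuasiGreedyWith K) {x : X} {Λ : Finset ℕ}
    (hΛ : S.IsGreedySet x Λ) {t : ℝ} (ht : ∀ j ∈ Λ, t ≤ |S.f j x|) :
    t * ‖S.ind Λ‖ ≤ 4 * K ^ 2 * ‖x‖ := by
  have hK0 := hK.nonneg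
  rcases le_or_gt t 0 with ht0 | ht0
  · exact (mul_nonpos_of_nonpos_of_nonneg ht0 (norm_nonneg _)).trans (by positivity)
  have hsign : ∀ i ∈ Λ, |S.f i x / (|S.f i x|)| = 1 := fun i hi => by
    rw [abs_div, abs_abs, div_self (ht0.trans_le (ht i hi)).ne']
  calc t * ‖S.ind Λ‖ ≤ t * (2 * K * ‖∑ i ∈ Λ, (S.f i x / |S.f i x|) • S.e i‖) :=
        mul_le_mul_of_nonneg_left (hK.norm_ind_le hsign) ht0.le
    _ = 2 * K * (t * ‖∑ i ∈ Λ, (S.f i x / |S.f i x|) • S.e i‖) := by ring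
    _ ≤ 2 * K * (2 * K * ‖x‖) :=
        mul_le_mul_of_nonneg_left (hK.mul_norm_sum_sign_le hΛ ht0 ht) (by positivity)
    _ = 4 * K ^ 2 * ‖x‖ := by ring

theorem QuasiGreedyWith.norm_sum_smul_le_of_dominated (hK : S.QuasiGreedyWith K)
    (hΓ : S.ConservativeWith Γ) {x : X} {Λ A : Finset ℕ} {c : ℕ → ℝ} (hΛ : S.IsGreedySet x Λ)
    (hcard : A.card ≤ Λ.card) (hlt : ∀ i ∈ A, ∀ j ∈ Λ, i < j)
    (hdom : ∀ i ∈ A, ∀ j ∈ Λ, |c i| ≤ |S.f j x|) :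
    ‖∑ i ∈ A, c i • S.e i‖ ≤ 8 * Γ * K ^ 2 * ‖x‖ := by
  have hΓ0 := hΓ.nonneg
  rcases Λ.eq_empty_or_nonempty with rfl | hne
  · rw [Finset.card_eq_zero.1 (Nat.le_zero.1 hcard), Finset.sum_empty, norm_zero]
    positivity
  obtain ⟨k, hk, hmin⟩ := Λ.exists_min_image (fun j => |S.f j x|) hne
  calc ‖∑ i ∈ A, c i • S.e i‖ ≤ 2 * |S.f k x| * (Γ * ‖S.ind Λ‖) :=
        norm_sum_smul_le_of_abs_le S.e (abs_nonneg _) (fun i hi => hdom i hi k hk) fun B hB =>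
          hΓ B Λ ((Finset.card_le_card hB).trans hcard) fun i hi => hlt i (hB hi)
    _ = 2 * Γ * (|S.f k x| * ‖S.ind Λ‖) := by ring
    _ ≤ 2 * Γ * (4 * K ^ 2 * ‖x‖) :=
        mul_le_mul_of_nonneg_left (hK.mul_norm_ind_le hΛ hmin) (by positivity)
    _ = 8 * Γ * K ^ 2 * ‖x‖ := by ring

theorem QuasiGreedyWith.norm_sub_P_le (hK : S.QuasiGreedyWith K) (hΓ : S.ConservativeWith Γ)
    {x : X} {Λ A : Finset ℕ} (hΛ : S.IsGreedySet x Λ) (hcard : A.card ≤ Λ.card)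
    (hlt : ∀ i ∈ A \ Λ, ∀ j ∈ Λ \ A, i < j) :
    ‖x - S.P Λ x‖ ≤ (1 + K + 8 * Γ * K ^ 2) * ‖x - S.P A x‖ := by
  set y := x - S.P A x with hy
  have hgreedy : S.IsGreedySet y (Λ \ A) := hΛ.sub_P A
  have hright : ‖S.P (Λ \ A) y‖ ≤ K * ‖y‖ := hK y _ hgreedy
  have hleft : ‖S.P (A \ Λ) x‖ ≤ 8 * Γ * K ^ 2 * ‖y‖ := by
    refine hK.norm_sum_smul_le_of_dominated hΓ hgreedy
      (Finset.card_sdiff_le_card_sdiff_iff.2 hcard) hlt fun i hi j hj => ?_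
    rw [Finset.mem_sdiff] at hi hj
    rw [hy, f_sub_P, if_neg hj.2]
    exact hΛ.abs_f_le hi.2 hj.1
  have hsplit : x - S.P Λ x = y - S.P (Λ \ A) y + S.P (A \ Λ) x := by
    have hdiff : S.P (Λ \ A) x - S.P (A \ Λ) x = S.P Λ x - S.P A x :=
      Finset.sum_sdiff_sub_sum_sdiff
    rw [hy, P_sub_P_of_disjoint S Finset.sdiff_disjoint, sub_add, hdiff, sub_sub_sub_cancel_right]
  calc ‖x - S.P Λ x‖ ≤ ‖y‖ + K * ‖y‖ + 8 * Γ * K ^ 2 * ‖y‖ :=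
        hsplit ▸ norm_add_le_of_le (norm_sub_le_of_le le_rfl hright) hleft
    _ = (1 + K + 8 * Γ * K ^ 2) * ‖y‖ := by ring

theorem QuasiGreedyWith.partiallyGreedyWith (hK : S.QuasiGreedyWith K)
    (hΓ : S.ConservativeWith Γ) : S.PartiallyGreedyWith (1 + K + 8 * Γ * K ^ 2) := fun x Λ hΛ =>
  hK.norm_sub_P_le hΓ hΛ (Finset.card_range _).le fun i hi j hj => by
    simp only [Finset.mem_sdiff, Finset.mem_range] at hi hj
    omega

theorem QuasiGreedyWith.leftGreedyWith (hK : S.QuasiGreedyWith K)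
    (hΓ : S.ConservativeWith Γ) : S.LeftGreedyWith (1 + K + 8 * Γ * K ^ 2) :=
  fun _ _ _ hΛ hcard hlt => hK.norm_sub_P_le hΓ hΛ hcard fun i hi j hj =>
    hlt i (Finset.mem_sdiff.1 hi).1 j (Finset.mem_sdiff.1 hj).1

end Sufficiency

end SchauderBasisSys

theorem stmt_0_general {X : Type*} [NormedAddCommGroup X] [NormedSpace ℝ X]
    (S : SchauderBasisSys X) {K : ℝ} (hS : S.HasBasisConstant K) :
    List.TFAE
      [S.PartiallyGreedy,
       S.QuasiGreedy ∧ S.Conservative,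
       ∃ C : ℝ, ∀ (x : X) (ρ : ℕ → ℕ) (m : ℕ) (A : Finset ℕ),
         S.IsGreedyOrdering x ρ → A.card ≤ m →
         (∀ i ∈ A, ∀ j ∈ Lam ρ m, i < j) →
         ‖x - S.G x ρ m‖ ≤ C * ‖x - S.P A x‖] := by
  simp only [partiallyGreedy_iff, quasiGreedy_iff, ← leftGreedyWith_iff]
  tfae_have 1 → 2 := fun ⟨_, hC⟩ =>
    have hq := hC.quasiGreedyWith hS
    ⟨⟨_, hq⟩, _, hC.conservativeWith hq⟩
  tfae_have 2 → 1 := fun ⟨⟨_, hq⟩, _, hc⟩ => ⟨_, hq.partiallyGreedyWith hc⟩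
  tfae_have 2 → 3 := fun ⟨⟨_, hq⟩, _, hc⟩ => ⟨_, hq.leftGreedyWith hc⟩
  tfae_have 3 → 2 := fun ⟨_, hC⟩ => ⟨⟨_, hC.quasiGreedyWith⟩, _, hC.conservativeWith⟩
  tfae_finish

/-- For a Schauder basis of a real Banach space, the following are
equivalent: (a) the basis is partially greedy; (b) it is quasi-greedy and conservative;
(c) there is a constant `C` with `‖x - G_m(x)‖ ≤ C σ̃^L_m(x)` for all `x`, `m` and all
greedy orderings, where `σ̃^L_m(x)` is the infimum of `‖x - P_A(x)‖` over finite `A`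
with `|A| ≤ m` and `max A < α_m(x) = min Λ_m(x)`. -/
theorem stmt_0 {X : Type*} [NormedAddCommGroup X] [NormedSpace ℝ X] [CompleteSpace X]
    (S : SchauderBasisSys X) :
    List.TFAE
      [S.PartiallyGreedy,
       S.QuasiGreedy ∧ S.Conservative,
       ∃ C : ℝ, ∀ (x : X) (ρ : ℕ → ℕ) (m : ℕ) (A : Finset ℕ),
         S.IsGreedyOrdering x ρ → A.card ≤ m →
         (∀ i ∈ A, ∀ j ∈ Lam ρ m, i < j) →
         ‖x - S.G x ρ m‖ ≤ C * ‖x - S.P A x‖] := by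
  obtain ⟨_, hS⟩ := S.exists_hasBasisConstant
  exact stmt_0_general S hS
end

section
/- For n ≥ 1 let F_n = {A ⊂ ℕ finite : |A| ≤ n! and n! ≤ min A} and F = ⋃_{n≥1} F_n, and on the space c00 of finitely supported real sequences define ‖x‖ = sup{Σ_{i∈A}|x_i| : A ∈ F}. Then ‖·‖ is a norm on c00 for which the canonical unit vector basis is 1-unconditional and 1-conservative (‖1_A‖ ≤ ‖1_B‖ whenever A, B are finite with |A| ≤ |B| and max A < min B); moreover ‖1_{[1,n!]}‖ = (n−1)! and ‖1_{[n!+1,2n!]}‖ = n! for every n ≥ 2, so the canonical basis is not democratic (there is no constant Γ with ‖1_A‖ ≤ Γ‖1_B‖ for all finite A, B with |A| ≤ |B|). -/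
/-!
For any family `𝓕` of finite sets, `‖x‖ = sup_{A ∈ 𝓕} ∑_{i ∈ A} ‖x i‖` is a monotone seminorm, and
a norm once `𝓕` covers the index set; on an indicator it is `‖1_A‖ = sup_{C ∈ 𝓕} |C ∩ A|`. If `𝓕`
is hereditary and spreading and `A` lies to the left of `B` with `|A| ≤ |B|`, then each trace
`C ∩ A` can be pushed to the right into `B` without leaving `𝓕`, so the basis is `1`-conservative.

Democracy fails because the first `(m + 1)!` integers only see `m!`: a set in `F_k` with `k > m`
starts no earlier than at `(m + 1)!`, so it meets them in at most one point, while a set in `F_k`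
with `k ≤ m` has at most `m!` elements. The next `(m + 1)!` integers form a member of `F`, so
the two norms have ratio `m + 1`.
-/

/-- The family `F = ⋃_{n ≥ 1} F_n`, where `F_n` consists of the finite sets `A` with
`|A| ≤ n!` whose least element is at least `n!`. Here `c₀₀` is modelled as `ℕ →₀ ℝ` with
coordinates indexed from `0`, corresponding to the paper's indices `1, 2, …`; so the
condition `n! ≤ min A` (in paper indexing) reads `n! ≤ i + 1` for all `i ∈ A`. -/
def FF : Set (Finset ℕ) :=
  {A | ∃ n : ℕ, 1 ≤ n ∧ A.card ≤ n.factorial ∧ ∀ i ∈ A, n.factorial ≤ i + 1}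

/-- The norm `‖x‖ = sup{∑_{i ∈ A} |x_i| : A ∈ F}` on finitely supported sequences. -/
noncomputable def normF (x : ℕ →₀ ℝ) : ℝ :=
  sSup {r : ℝ | ∃ A ∈ FF, r = ∑ i ∈ A, |x i|}

/-- The indicator vector `1_A` in `c₀₀`. -/
noncomputable def indF (A : Finset ℕ) : ℕ →₀ ℝ :=
  ∑ i ∈ A, Finsupp.single i (1 : ℝ)

open Finset

section FamilyNorm

variable {ι 𝕜 E F : Type*} {𝓕 : Set (Finset ι)}

/-- The norm `sup_{A ∈ 𝓕} ∑_{i ∈ A} ‖x i‖` of the combinatorial space of a family `𝓕` of finite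
sets, on finitely supported functions with values in a seminormed group. -/
noncomputable def familyNorm [SeminormedAddCommGroup E] (𝓕 : Set (Finset ι)) (x : ι →₀ E) : ℝ :=
  ⨆ A : 𝓕, ∑ i ∈ A.1, ‖x i‖

/-- A family of finite sets is spreading if it contains every set obtained from a member by moving
its elements upwards injectively. -/
def IsSpreading [Preorder ι] (𝓕 : Set (Finset ι)) : Prop :=
  ∀ C ∈ 𝓕, ∀ f : C ↪ ι, (∀ i : C, ↑i ≤ f i) → univ.map f ∈ 𝓕

section Seminorm

variable [SeminormedAddCommGroup E] [SeminormedAddCommGroup F]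

theorem sum_norm_le_familyNorm (x : ι →₀ E) {A : Finset ι} (hA : A ∈ 𝓕) :
    ∑ i ∈ A, ‖x i‖ ≤ familyNorm 𝓕 x := by
  have summable_norm : Summable fun i ↦ ‖x i‖ :=
    summable_of_hasFiniteSupport (x.hasFiniteSupport.subset fun i hi ↦ by
      contrapose! hi
      simp_all)
  have bddAbove : BddAbove (Set.range fun A : 𝓕 ↦ ∑ i ∈ A.1, ‖x i‖) :=
    ⟨∑' i, ‖x i‖, Set.forall_mem_range.2 fun A ↦
      summable_norm.sum_le_tsum A.1 fun i _ ↦ norm_nonneg (x i)⟩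
  exact le_ciSup bddAbove ⟨A, hA⟩

theorem familyNorm_le {x : ι →₀ E} {r : ℝ} (hr : 0 ≤ r) (h : ∀ A ∈ 𝓕, ∑ i ∈ A, ‖x i‖ ≤ r) :
    familyNorm 𝓕 x ≤ r :=
  Real.iSup_le (fun A ↦ h A.1 A.2) hr

theorem familyNorm_nonneg (𝓕 : Set (Finset ι)) (x : ι →₀ E) : 0 ≤ familyNorm 𝓕 x :=
  Real.iSup_nonneg fun _ ↦ sum_nonneg fun i _ ↦ norm_nonneg (x i)

theorem familyNorm_mono {x : ι →₀ E} {y : ι →₀ F} (h : ∀ i, ‖x i‖ ≤ ‖y i‖) :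
    familyNorm 𝓕 x ≤ familyNorm 𝓕 y :=
  familyNorm_le (familyNorm_nonneg 𝓕 y) fun _ hA ↦
    (sum_le_sum fun i _ ↦ h i).trans (sum_norm_le_familyNorm y hA)

theorem familyNorm_add_le (x y : ι →₀ E) :
    familyNorm 𝓕 (x + y) ≤ familyNorm 𝓕 x + familyNorm 𝓕 y := by
  refine familyNorm_le (add_nonneg (familyNorm_nonneg 𝓕 x) (familyNorm_nonneg 𝓕 y)) fun A hA ↦ ?_
  calc ∑ i ∈ A, ‖(x + y) i‖ ≤ ∑ i ∈ A, (‖x i‖ + ‖y i‖) := sum_le_sum fun i _ ↦ norm_add_le _ _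
    _ = ∑ i ∈ A, ‖x i‖ + ∑ i ∈ A, ‖y i‖ := sum_add_distrib
    _ ≤ familyNorm 𝓕 x + familyNorm 𝓕 y :=
        add_le_add (sum_norm_le_familyNorm x hA) (sum_norm_le_familyNorm y hA)

theorem familyNorm_smul [SeminormedRing 𝕜] [Module 𝕜 E] [NormSMulClass 𝕜 E]
    (c : 𝕜) (x : ι →₀ E) : familyNorm 𝓕 (c • x) = ‖c‖ * familyNorm 𝓕 x := by
  simp only [familyNorm, Finsupp.smul_apply, norm_smul, ← mul_sum,
    Real.mul_iSup_of_nonneg (norm_nonneg c)]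

end Seminorm

theorem familyNorm_eq_zero_iff [NormedAddCommGroup E] (h𝓕 : ∀ i, ∃ A ∈ 𝓕, i ∈ A) {x : ι →₀ E} :
    familyNorm 𝓕 x = 0 ↔ x = 0 := by
  refine ⟨fun hx ↦ Finsupp.ext fun i ↦ ?_, fun hx ↦ by simp [hx, familyNorm]⟩
  obtain ⟨A, hA, hiA⟩ := h𝓕 i
  have norm_apply_le : ‖x i‖ ≤ familyNorm 𝓕 x :=
    (single_le_sum (f := fun i ↦ ‖x i‖) (fun i _ ↦ norm_nonneg _) hiA).trans
      (sum_norm_le_familyNorm x hA)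
  simpa [hx] using norm_apply_le

section Indicator

variable {A B C : Finset ι}

theorem sum_norm_indicator_one [DecidableEq ι] (A C : Finset ι) :
    ∑ i ∈ C, ‖Finsupp.indicator A (fun _ _ ↦ (1 : ℝ)) i‖ = #(C ∩ A) := by
  simp [Finsupp.indicator_apply, apply_ite norm]

theorem familyNorm_indicator_le [DecidableEq ι] {r : ℝ} (hr : 0 ≤ r)
    (h : ∀ C ∈ 𝓕, (#(C ∩ A) : ℝ) ≤ r) :
    familyNorm 𝓕 (Finsupp.indicator A fun _ _ ↦ (1 : ℝ)) ≤ r :=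
  familyNorm_le hr fun C hC ↦ (sum_norm_indicator_one A C).trans_le (h C hC)

theorem card_le_familyNorm_indicator (hC : C ∈ 𝓕) (hCA : C ⊆ A) :
    (#C : ℝ) ≤ familyNorm 𝓕 (Finsupp.indicator A fun _ _ ↦ (1 : ℝ)) := by
  classical
  simpa only [sum_norm_indicator_one, inter_eq_left.2 hCA] using
    sum_norm_le_familyNorm (Finsupp.indicator A fun _ _ ↦ (1 : ℝ)) hC

theorem familyNorm_indicator_of_mem (hA : A ∈ 𝓕) :
    familyNorm 𝓕 (Finsupp.indicator A fun _ _ ↦ (1 : ℝ)) = #A := by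
  classical
  exact le_antisymm
    (familyNorm_indicator_le (Nat.cast_nonneg _) fun _ _ ↦
      Nat.cast_le.2 (card_le_card inter_subset_right))
    (card_le_familyNorm_indicator hA Subset.rfl)

theorem IsSpreading.familyNorm_indicator_le_of_card_le [Preorder ι] (h𝓕 : IsSpreading 𝓕)
    (hereditary : IsLowerSet 𝓕) (hcard : #A ≤ #B) (hAB : ∀ i ∈ A, ∀ j ∈ B, i ≤ j) :
    familyNorm 𝓕 (Finsupp.indicator A fun _ _ ↦ (1 : ℝ)) ≤
      familyNorm 𝓕 (Finsupp.indicator B fun _ _ ↦ (1 : ℝ)) := by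
  classical
  refine familyNorm_indicator_le (familyNorm_nonneg 𝓕 _) fun C hC ↦ ?_
  obtain ⟨e⟩ : Nonempty (↥(C ∩ A) ↪ B) := Function.Embedding.nonempty_of_card_le <| by
    simpa only [Fintype.card_coe] using (card_le_card inter_subset_right).trans hcard
  let f : ↥(C ∩ A) ↪ ι := e.trans (.subtype _)
  have map_mem : univ.map f ∈ 𝓕 :=
    h𝓕 _ (hereditary inter_subset_left hC) f fun i ↦
      hAB i (mem_inter.1 i.2).2 (e i) (e i).2
  have map_subset : univ.map f ⊆ B := fun j hj ↦ by
    obtain ⟨i, -, rfl⟩ := mem_map.1 hj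
    exact (e i).2
  simpa only [card_map, card_univ, Fintype.card_coe] using
    card_le_familyNorm_indicator map_mem map_subset

end Indicator

end FamilyNorm

section Factorial

open Nat

theorem isLowerSet_FF : IsLowerSet FF := by
  rintro A B hBA ⟨n, hn, hcard, hmin⟩
  exact ⟨n, hn, (card_le_card hBA).trans hcard, fun i hi ↦ hmin i (hBA hi)⟩

theorem isSpreading_FF : IsSpreading FF := by
  rintro A ⟨n, hn, hcard, hmin⟩ f hf
  refine ⟨n, hn, by simpa using hcard, fun j hj ↦ ?_⟩
  obtain ⟨i, -, rfl⟩ := mem_map.1 hj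
  exact (hmin i i.2).trans (Nat.add_le_add_right (hf i) 1)

theorem Ico_mem_FF {n a b : ℕ} (hn : 1 ≤ n) (ha : n ! ≤ a + 1) (hb : b ≤ a + n !) :
    Ico a b ∈ FF :=
  ⟨n, hn, by rw [Nat.card_Ico]; lia, fun i hi ↦ ha.trans (by grind)⟩

theorem exists_mem_FF_mem (i : ℕ) : ∃ A ∈ FF, i ∈ A :=
  ⟨Ico i (i + 1), Ico_mem_FF le_rfl (by simp) (by simp), by simp⟩

theorem card_inter_range_factorial_le {A : Finset ℕ} (hA : A ∈ FF) (m : ℕ) :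
    #(A ∩ range (m + 1)!) ≤ m ! := by
  obtain ⟨k, -, hcard, hmin⟩ := hA
  rcases le_or_gt k m with hkm | hmk
  · exact (card_le_card inter_subset_left).trans (hcard.trans (factorial_le hkm))
  · have inter_subset : A ∩ range (m + 1)! ⊆ {(m + 1)! - 1} := fun i hi ↦ by
      have := factorial_le (Nat.succ_le_of_lt hmk)
      have := hmin i (mem_inter.1 hi).1
      have := mem_range.1 (mem_inter.1 hi).2
      rw [mem_singleton]
      lia
    exact (card_le_card inter_subset).trans m.factorial_pos

theorem familyNorm_indicator_range_factorial {m : ℕ} (hm : 1 ≤ m) :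
    familyNorm FF (Finsupp.indicator (range (m + 1)!) fun _ _ ↦ (1 : ℝ)) = m ! := by
  refine le_antisymm (familyNorm_indicator_le (Nat.cast_nonneg _) fun A hA ↦
    Nat.cast_le.2 (card_inter_range_factorial_le hA m)) ?_
  have two_mul_le : 2 * m ! ≤ (m + 1)! := Nat.mul_le_mul_right _ (by lia)
  have Ico_subset : Ico ((m !) - 1) ((m !) - 1 + m !) ⊆ range (m + 1)! := fun i hi ↦ by
    have := (mem_Ico.1 hi).2
    rw [mem_range]
    lia
  simpa using card_le_familyNorm_indicator (Ico_mem_FF hm (by lia) le_rfl) Ico_subset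

theorem familyNorm_indicator_Ico_factorial {n : ℕ} (hn : 1 ≤ n) :
    familyNorm FF (Finsupp.indicator (Ico n ! (2 * n !)) fun _ _ ↦ (1 : ℝ)) = n ! := by
  rw [familyNorm_indicator_of_mem (Ico_mem_FF hn (by lia) (by lia)), Nat.card_Ico, two_mul,
    Nat.add_sub_cancel]

theorem not_democratic_familyNorm_FF :
    ¬ ∃ Γ : ℝ, ∀ A B : Finset ℕ, #A ≤ #B →
      familyNorm FF (Finsupp.indicator A fun _ _ ↦ (1 : ℝ)) ≤
        Γ * familyNorm FF (Finsupp.indicator B fun _ _ ↦ (1 : ℝ)) := by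
  rintro ⟨Γ, hΓ⟩
  obtain ⟨m, hm⟩ := exists_nat_ge Γ
  have factorial_le_mul : ((m + 2)! : ℝ) ≤ Γ * (m + 1)! := by
    have hcard : #(Ico (m + 2)! (2 * (m + 2)!)) ≤ #(range (m + 2)!) := by
      rw [Nat.card_Ico, card_range]
      lia
    simpa only [familyNorm_indicator_Ico_factorial (Nat.le_add_left 1 (m + 1)),
      familyNorm_indicator_range_factorial (Nat.le_add_left 1 m)] using hΓ _ _ hcard
  have le_Γ : (m + 2 : ℝ) ≤ Γ := by
    refine le_of_mul_le_mul_right ?_ (Nat.cast_pos.2 (m + 1).factorial_pos)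
    exact_mod_cast factorial_le_mul
  linarith

end Factorial

theorem normF_eq_familyNorm : normF = familyNorm FF := by
  funext x
  simp only [normF, familyNorm, iSup, Set.range, Subtype.exists, exists_prop, eq_comm,
    Real.norm_eq_abs]

theorem indF_eq_indicator (A : Finset ℕ) : indF A = Finsupp.indicator A fun _ _ ↦ (1 : ℝ) :=
  (Finsupp.indicator_eq_sum_single A fun _ ↦ (1 : ℝ)).symm

/-- `normF` is a norm on `c₀₀` for which the canonical basis is
`1`-unconditional and `1`-conservative; moreover `‖1_{[1,n!]}‖ = (n-1)!` and
`‖1_{[n!+1,2n!]}‖ = n!` for `n ≥ 2` (in paper indexing; here `[1,n!]` is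
`Finset.range n!` and `[n!+1,2n!]` is `Finset.Ico n! (2n!)`), so the canonical basis is
not democratic. -/
theorem stmt_2 :
    (∀ x : ℕ →₀ ℝ, normF x = 0 ↔ x = 0) ∧
    (∀ (c : ℝ) (x : ℕ →₀ ℝ), normF (c • x) = |c| * normF x) ∧
    (∀ x y : ℕ →₀ ℝ, normF (x + y) ≤ normF x + normF y) ∧
    (∀ x y : ℕ →₀ ℝ, (∀ i : ℕ, |x i| ≤ |y i|) → normF x ≤ normF y) ∧
    (∀ A B : Finset ℕ, A.card ≤ B.card → (∀ i ∈ A, ∀ j ∈ B, i < j) →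
      normF (indF A) ≤ normF (indF B)) ∧
    (∀ n : ℕ, 2 ≤ n →
      normF (indF (Finset.range n.factorial)) = (n - 1).factorial ∧
      normF (indF (Finset.Ico n.factorial (2 * n.factorial))) = n.factorial) ∧
    ¬ ∃ Γ : ℝ, ∀ A B : Finset ℕ, A.card ≤ B.card →
        normF (indF A) ≤ Γ * normF (indF B) := by
  simp only [normF_eq_familyNorm, indF_eq_indicator]
  refine ⟨fun _ ↦ familyNorm_eq_zero_iff exists_mem_FF_mem, familyNorm_smul, familyNorm_add_le,
    fun _ _ h ↦ familyNorm_mono h, ?conservative, ?factorial, not_democratic_familyNorm_FF⟩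
  case conservative =>
    exact fun A B hcard hlt ↦ isSpreading_FF.familyNorm_indicator_le_of_card_le isLowerSet_FF
      hcard fun i hi j hj ↦ (hlt i hi j hj).le
  case factorial =>
    rintro (_ | m) hn
    · contradiction
    · exact ⟨familyNorm_indicator_range_factorial (Nat.le_of_succ_le_succ hn),
        familyNorm_indicator_Ico_factorial (Nat.le_add_left 1 m)⟩
end

section
/- Let X be a real Banach space with a Schauder basis (e_n) with basis constant K_b. If there is a constant Γ ≥ 1 such that ‖1_A‖ ≤ Γ‖1_B‖ whenever A, B are finite subsets of ℕ with |A| ≤ |B| and either max A < min B or max B < min A (i.e., (e_n) is both conservative and reverse conservative with constant Γ), then (e_n) is democratic; more precisely, ‖1_A‖ ≤ (Γ(2K_b + 1) + 2K_b)‖1_B‖ for all finite A, B ⊂ ℕ with |A| ≤ |B|. -/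
open Filter Topology

open SchauderBasisSys

/-!
Choose `N` such that `A` has at most as many elements below `N` as `B` has from `N` on, and fewer
elements above `N` than `B` has up to `N`. The part of `A` below `N` is then controlled, by
conservativity, by the part of `B` from `N` on, and the rest of `A`, by reverse conservativity, by
an initial segment of `B`. The index `N` itself stands in the way only if it lies in both sets;
then `e N` is a difference of two initial segments of `1_B`, which accounts for the summand `2 K`.
-/

section LinearOrder

open scoped Finset

variable {ι : Type*} [LinearOrder ι]

theorem exists_mem_forall_le_iff_lt {s : Finset ι} {a : ι} (h : ∃ i ∈ s, i < a) :
    ∃ m ∈ s, ∀ i ∈ s, i ≤ m ↔ i < a := by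
  obtain ⟨m, hm, hmax⟩ := Finset.exists_max_image {i ∈ s | i < a} id
    (Finset.filter_nonempty_iff.2 h)
  obtain ⟨hms, hma⟩ := Finset.mem_filter.1 hm
  exact ⟨m, hms, fun i hi =>
    ⟨fun him => him.trans_lt hma, fun hia => hmax i (Finset.mem_filter.2 ⟨hi, hia⟩)⟩⟩

section AddCommMonoid

variable {M : Type*} [AddCommMonoid M]

theorem sum_filter_lt_add_sum_filter_ge (s : Finset ι) (f : ι → M) (a : ι) :
    ∑ i ∈ s with i < a, f i + ∑ i ∈ s with a ≤ i, f i = ∑ i ∈ s, f i := by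
  simpa only [not_lt] using Finset.sum_filter_add_sum_filter_not s (· < a) f

theorem sum_filter_le_eq_sum_filter_lt_add (s : Finset ι) (f : ι → M) (a : ι) :
    ∑ i ∈ s with i ≤ a, f i = ∑ i ∈ s with i < a, f i + if a ∈ s then f a else 0 := by
  have hdisj : Disjoint {i ∈ s | i < a} {i ∈ s | i = a} :=
    Finset.disjoint_filter.2 fun _ _ hlt heq => hlt.ne heq
  simp_rw [le_iff_lt_or_eq, Finset.filter_or, Finset.sum_union hdisj, Finset.sum_filter (· = a),
    Finset.sum_ite_eq']

theorem sum_filter_ge_eq_sum_filter_gt_add (s : Finset ι) (f : ι → M) (a : ι) :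
    ∑ i ∈ s with a ≤ i, f i = ∑ i ∈ s with a < i, f i + if a ∈ s then f a else 0 :=
  sum_filter_le_eq_sum_filter_lt_add (ι := ιᵒᵈ) s f a

end AddCommMonoid

theorem card_filter_lt_add_card_filter_ge (s : Finset ι) (a : ι) :
    #{i ∈ s | i < a} + #{i ∈ s | a ≤ i} = #s := by
  simpa only [Finset.card_eq_sum_ones] using sum_filter_lt_add_sum_filter_ge s (fun _ => 1) a

theorem exists_card_filter_lt_le_and_card_filter_gt_lt {A B : Finset ι} (hAB : #A ≤ #B)
    (hB : B.Nonempty) :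
    ∃ N, #{i ∈ A | i < N} ≤ #{i ∈ B | N ≤ i} ∧ #{i ∈ A | N < i} < #{i ∈ B | i ≤ N} := by
  have hlast : ∃ n ∈ A ∪ B, #{i ∈ A | n < i} < #{i ∈ B | i ≤ n} := by
    obtain ⟨n, hn, hmax⟩ := (A ∪ B).exists_max_image id (hB.mono Finset.subset_union_right)
    have hA : {i ∈ A | n < i} = ∅ :=
      Finset.filter_false_of_mem fun i hi => (hmax i (Finset.mem_union_left B hi)).not_gt
    have hB' : {i ∈ B | i ≤ n} = B :=
      Finset.filter_true_of_mem fun i hi => hmax i (Finset.mem_union_right A hi)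
    refine ⟨n, hn, ?_⟩
    rwa [hA, hB', Finset.card_empty, Finset.card_pos]
  obtain ⟨N, hN, hmin⟩ := Finset.exists_min_image
    {n ∈ A ∪ B | #{i ∈ A | n < i} < #{i ∈ B | i ≤ n}} id (Finset.filter_nonempty_iff.2 hlast)
  have hbefore : #{i ∈ B | i < N} ≤ #{i ∈ A | N ≤ i} := by
    by_cases hex : ∃ i ∈ A ∪ B, i < N
    · obtain ⟨m, hm, hiff⟩ := exists_mem_forall_le_iff_lt hex
      have hA : {i ∈ A | N ≤ i} = {i ∈ A | m < i} := Finset.filter_congr fun i hi => by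
        simpa only [not_lt, not_le] using (hiff i (Finset.mem_union_left B hi)).not.symm
      have hB' : {i ∈ B | i < N} = {i ∈ B | i ≤ m} := Finset.filter_congr fun i hi =>
        (hiff i (Finset.mem_union_right A hi)).symm
      rw [hA, hB']
      by_contra! hlt
      exact (hmin m (Finset.mem_filter.2 ⟨hm, hlt⟩)).not_gt ((hiff m hm).1 le_rfl)
    · have hB' : {i ∈ B | i < N} = ∅ := Finset.filter_false_of_mem fun i hi hiN =>
        hex ⟨i, Finset.mem_union_right A hi, hiN⟩
      simp only [hB', Finset.card_empty, zero_le]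
  have hcardA := card_filter_lt_add_card_filter_ge A N
  have hcardB := card_filter_lt_add_card_filter_ge B N
  exact ⟨N, by omega, (Finset.mem_filter.1 hN).2⟩

theorem card_filter_ge_le_card_filter_lt {A B : Finset ι} {N : ι}
    (hcard : #{i ∈ A | N < i} < #{i ∈ B | i ≤ N}) (hN : ¬(N ∈ A ∧ N ∈ B)) :
    #{i ∈ A | N ≤ i} ≤ #{i ∈ B | i < N} := by
  simp only [Finset.card_eq_sum_ones, sum_filter_le_eq_sum_filter_lt_add] at hcard
  simp only [Finset.card_eq_sum_ones, sum_filter_ge_eq_sum_filter_gt_add]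
  grind

section SeminormedAddCommGroup

variable {E : Type*} [SeminormedAddCommGroup E] {e : ι → E} {K : ℝ}

theorem norm_sum_filter_lt_le
    (hK : ∀ (B : Finset ι) (N : ι), ‖∑ i ∈ B with i ≤ N, e i‖ ≤ K * ‖∑ i ∈ B, e i‖)
    (B : Finset ι) (N : ι) : ‖∑ i ∈ B with i < N, e i‖ ≤ K * ‖∑ i ∈ B, e i‖ := by
  by_cases hex : ∃ i ∈ B, i < N
  · obtain ⟨m, -, hiff⟩ := exists_mem_forall_le_iff_lt hex
    rw [← Finset.filter_congr hiff]
    exact hK B m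
  · have hempty : {i ∈ B | i < N} = ∅ :=
      Finset.filter_false_of_mem fun i hi hiN => hex ⟨i, hi, hiN⟩
    rw [hempty, Finset.sum_empty, norm_zero]
    exact (norm_nonneg _).trans (hK B N)

theorem norm_sum_filter_ge_le
    (hK : ∀ (B : Finset ι) (N : ι), ‖∑ i ∈ B with i ≤ N, e i‖ ≤ K * ‖∑ i ∈ B, e i‖)
    (B : Finset ι) (N : ι) : ‖∑ i ∈ B with N ≤ i, e i‖ ≤ (K + 1) * ‖∑ i ∈ B, e i‖ := by
  rw [eq_sub_of_add_eq' (sum_filter_lt_add_sum_filter_ge B e N)]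
  linarith [norm_sub_le (∑ i ∈ B, e i) (∑ i ∈ B with i < N, e i), norm_sum_filter_lt_le hK B N]

theorem norm_apply_le_of_mem
    (hK : ∀ (B : Finset ι) (N : ι), ‖∑ i ∈ B with i ≤ N, e i‖ ≤ K * ‖∑ i ∈ B, e i‖)
    {B : Finset ι} {N : ι} (hN : N ∈ B) : ‖e N‖ ≤ 2 * K * ‖∑ i ∈ B, e i‖ := by
  have hsum := sum_filter_le_eq_sum_filter_lt_add B e N
  rw [if_pos hN] at hsum
  rw [eq_sub_of_add_eq' hsum.symm]
  linarith [norm_sub_le (∑ i ∈ B with i ≤ N, e i) (∑ i ∈ B with i < N, e i), hK B N,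
    norm_sum_filter_lt_le hK B N]

theorem stmt_4_general {Γ Γ' : ℝ} (hΓ : 0 ≤ Γ) (hΓ' : 0 ≤ Γ')
    (hK : ∀ (B : Finset ι) (N : ι), ‖∑ i ∈ B with i ≤ N, e i‖ ≤ K * ‖∑ i ∈ B, e i‖)
    (hcons : ∀ A B : Finset ι, #A ≤ #B → (∀ i ∈ A, ∀ j ∈ B, i < j) →
      ‖∑ i ∈ A, e i‖ ≤ Γ * ‖∑ i ∈ B, e i‖)
    (hrev : ∀ A B : Finset ι, #A ≤ #B → (∀ i ∈ A, ∀ j ∈ B, j < i) →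
      ‖∑ i ∈ A, e i‖ ≤ Γ' * ‖∑ i ∈ B, e i‖)
    {A B : Finset ι} (hAB : #A ≤ #B) :
    ‖∑ i ∈ A, e i‖ ≤ (Γ * (K + 1) + Γ' * K + 2 * K) * ‖∑ i ∈ B, e i‖ := by
  rcases B.eq_empty_or_nonempty with rfl | hB
  · simp [Finset.card_eq_zero.1 (Nat.le_zero.1 hAB)]
  obtain ⟨N, hcard_lt, hcard_gt⟩ := exists_card_filter_lt_le_and_card_filter_gt_lt hAB hB
  have hbelow : ‖∑ i ∈ A with i < N, e i‖ ≤ Γ * ((K + 1) * ‖∑ i ∈ B, e i‖) :=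
    (hcons _ _ hcard_lt fun i hi j hj =>
      (Finset.mem_filter.1 hi).2.trans_le (Finset.mem_filter.1 hj).2).trans
      (mul_le_mul_of_nonneg_left (norm_sum_filter_ge_le hK B N) hΓ)
  rw [← sum_filter_lt_add_sum_filter_ge A e N]
  by_cases hN : N ∈ A ∧ N ∈ B
  · have habove : ‖∑ i ∈ A with N < i, e i‖ ≤ Γ' * (K * ‖∑ i ∈ B, e i‖) :=
      (hrev _ _ hcard_gt.le fun i hi j hj =>
        (Finset.mem_filter.1 hj).2.trans_lt (Finset.mem_filter.1 hi).2).trans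
        (mul_le_mul_of_nonneg_left (hK B N) hΓ')
    rw [sum_filter_ge_eq_sum_filter_gt_add, if_pos hN.1, ← add_assoc]
    linarith [norm_add₃_le (a := ∑ i ∈ A with i < N, e i) (b := ∑ i ∈ A with N < i, e i)
      (c := e N), norm_apply_le_of_mem hK hN.2]
  · have hfrom : ‖∑ i ∈ A with N ≤ i, e i‖ ≤ Γ' * (K * ‖∑ i ∈ B, e i‖) :=
      (hrev _ _ (card_filter_ge_le_card_filter_lt hcard_gt hN) fun i hi j hj =>
        (Finset.mem_filter.1 hj).2.trans_le (Finset.mem_filter.1 hi).2).trans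
        (mul_le_mul_of_nonneg_left (norm_sum_filter_lt_le hK B N) hΓ')
    have hnonneg : 0 ≤ K * ‖∑ i ∈ B, e i‖ := (norm_nonneg _).trans (hK B N)
    linarith [norm_add_le (∑ i ∈ A with i < N, e i) (∑ i ∈ A with N ≤ i, e i)]

end SeminormedAddCommGroup

end LinearOrder

namespace SchauderBasisSys

variable {X : Type*} [NormedAddCommGroup X] [NormedSpace ℝ X]

theorem f_ind (S : SchauderBasisSys X) (B : Finset ℕ) (n : ℕ) :
    S.f n (S.ind B) = if n ∈ B then 1 else 0 := by
  simp only [ind, map_sum, S.biorth, Finset.sum_ite_eq]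

theorem sum_range_f_ind_smul (S : SchauderBasisSys X) (B : Finset ℕ) (N : ℕ) :
    ∑ n ∈ Finset.range N, S.f n (S.ind B) • S.e n = ∑ i ∈ B with i < N, S.e i := by
  simp only [f_ind, ite_smul, one_smul, zero_smul, ← Finset.sum_filter]
  congr 1
  ext i
  simp only [Finset.mem_filter, Finset.mem_range, and_comm]

theorem norm_sum_filter_le_le (S : SchauderBasisSys X) {K : ℝ}
    (hK : ∀ (x : X) (N : ℕ), ‖∑ n ∈ Finset.range N, S.f n x • S.e n‖ ≤ K * ‖x‖)
    (B : Finset ℕ) (N : ℕ) : ‖∑ i ∈ B with i ≤ N, S.e i‖ ≤ K * ‖S.ind B‖ := by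
  simpa only [sum_range_f_ind_smul, Nat.lt_succ_iff] using hK (S.ind B) (N + 1)

end SchauderBasisSys

/-- If a Schauder basis with basis constant `K_b` is simultaneously
conservative and reverse conservative with constant `Γ ≥ 1`, then it is democratic with
constant `Γ(2K_b + 1) + 2K_b`. -/
theorem stmt_4 {X : Type*} [NormedAddCommGroup X] [NormedSpace ℝ X] [CompleteSpace X]
    (S : SchauderBasisSys X) (Kb Γ : ℝ) (hΓ : 1 ≤ Γ)
    (hKb : ∀ (x : X) (N : ℕ), ‖∑ n ∈ Finset.range N, S.f n x • S.e n‖ ≤ Kb * ‖x‖)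
    (hcons : ∀ A B : Finset ℕ, A.card ≤ B.card →
      ((∀ i ∈ A, ∀ j ∈ B, i < j) ∨ (∀ i ∈ A, ∀ j ∈ B, j < i)) →
      ‖S.ind A‖ ≤ Γ * ‖S.ind B‖) :
    ∀ A B : Finset ℕ, A.card ≤ B.card →
      ‖S.ind A‖ ≤ (Γ * (2 * Kb + 1) + 2 * Kb) * ‖S.ind B‖ := by
  intro A B hAB
  have hΓ₀ : 0 ≤ Γ := zero_le_one.trans hΓ
  refine (stmt_4_general hΓ₀ hΓ₀ (S.norm_sum_filter_le_le hKb)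
    (fun A B h hlt => hcons A B h (.inl hlt))
    (fun A B h hlt => hcons A B h (.inr hlt)) hAB).trans_eq ?_
  rw [ind]
  ring
end
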